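/- arXiv:2512.16597 — 2 statements merged into one kernel-verified Lean document; each statement's English description precedes it below -/
import Mathlib

section
/- Let K = ℚ(√3) and let E be the elliptic curve over K given by y² = x³ − 2x² − 3x = x(x + 1)(x − 3). Then E(K) contains a point P with 2P ≠ 0, but every point of E(K) has finite additive order (equivalently, E(K) is a finite group). Hence n = 1 is (ℚ(√3), 2π/3)-congruent but not properly (ℚ(√3), 2π/3)-congruent. -/
open IntermediateField

/-!
Write `K = ℚ(√3)` and let `σ` be the nontrivial automorphism of `K`, acting on `E(K)`. For every
`P`, the point `P + σP` is fixed by `σ`, hence rational, while `P - σP` is negated by `σ`, hence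
comes from a rational point of the twist `3y² = x³ - 2x² - 3x`; their sum is `2P`. So it is enough
that the rational points of `ty² = x(x + 1)(x - 3)` are killed by `2` for `t = 1` and `t = 3`.

If `Q` is such a point with `2Q ≠ 0`, the coordinates of `2Q` make `x`, `x + t` and `x - 3t` squares
on the model `y² = x(x + t)(x - 3t)`, so with `√x = p / q` in lowest terms both `p² + tq²` and
`p² - 3tq²` are squares. These are Euler's concordant forms, and a Fermat descent on `q` rules them
out: comparing the parametrisations of `r² - s² = 4tq²` and `r² - p² = tq²`, where `r² = p² + tq²`
and `s² = p² - 3tq²`, produces a solution with smaller `q`.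
-/

lemma sq_emod_sixteen_or_emod_eight (x : ℤ) :
    Even x ∧ (x ^ 2 % 16 = 0 ∨ x ^ 2 % 16 = 4) ∨ Odd x ∧ x ^ 2 % 8 = 1 := by
  rcases x.even_or_odd' with ⟨k, rfl | rfl⟩
  · refine .inl ⟨even_two_mul k, ?_⟩
    rcases k.even_or_odd with ⟨j, rfl⟩ | hk
    · ring_nf
      omega
    · have := Int.sq_mod_four_eq_one_of_odd hk
      rw [mul_pow]
      omega
  · have hodd : Odd (2 * k + 1) := odd_two_mul_add_one k
    have := Int.eight_dvd_sq_sub_one_of_odd hodd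
    exact .inr ⟨hodd, by omega⟩

lemma exists_eq_sq_of_nonneg {x y c : ℤ} (hx : 0 ≤ x) (hxy : IsCoprime x y)
    (h : x * y = c ^ 2) : ∃ u : ℤ, x = u ^ 2 := by
  obtain ⟨u, hu | hu⟩ := Int.sq_of_isCoprime hxy h
  · exact ⟨u, hu⟩
  · exact ⟨0, by nlinarith [sq_nonneg u]⟩

lemma exists_eq_mul_sq_and_eq_sq {t x y c : ℤ} (ht : 0 < t) (hx : 0 ≤ x) (hy : 0 ≤ y)
    (hxy : IsCoprime x y) (h : x * y = t * c ^ 2) (htx : t ∣ x) :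
    ∃ u v : ℤ, x = t * v ^ 2 ∧ y = u ^ 2 ∧ c = u * v := by
  obtain ⟨z, rfl⟩ := htx
  have hzy : z * y = c ^ 2 := mul_left_cancel₀ ht.ne' (by rw [← h, mul_assoc])
  have hco : IsCoprime z y := hxy.of_mul_left_right
  obtain ⟨v, rfl⟩ := exists_eq_sq_of_nonneg (nonneg_of_mul_nonneg_right hx ht) hco hzy
  obtain ⟨u, rfl⟩ := exists_eq_sq_of_nonneg hy hco.symm (mul_comm y _ ▸ hzy)
  rcases sq_eq_sq_iff_eq_or_eq_neg.1 (show c ^ 2 = (u * v) ^ 2 by linear_combination -hzy)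
    with rfl | rfl
  · exact ⟨u, v, rfl, rfl, rfl⟩
  · exact ⟨-u, v, rfl, by ring, by ring⟩

lemma exists_eq_sq_add_mul_sq {t r s c : ℤ} (ht : t = 1 ∨ Prime t) (ht₀ : 0 < t) (hr₀ : 0 ≤ r)
    (hr : Odd r) (hs : Odd s) (hrs : IsCoprime r s) (h : r ^ 2 - s ^ 2 = 4 * (t * c ^ 2)) :
    ∃ u v : ℤ, r = u ^ 2 + t * v ^ 2 ∧ c = u * v ∧ IsCoprime u (t * v) := by
  obtain ⟨x, hx⟩ := hr.add_odd hs
  obtain ⟨y, rfl⟩ : ∃ y, r = x + y := ⟨r - x, by ring⟩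
  obtain rfl : s = x - y := by linarith
  have hxy : IsCoprime x y := by
    obtain ⟨a, b, hab⟩ := hrs
    exact ⟨a + b, a - b, by linear_combination hab⟩
  have hprod : x * y = t * c ^ 2 := by linarith
  have hle : -(x + y) ≤ x - y ∧ x - y ≤ x + y :=
    abs_le_of_sq_le_sq' (by nlinarith [mul_nonneg ht₀.le (sq_nonneg c)]) hr₀
  have hx₀ : 0 ≤ x := by linarith
  have hy₀ : 0 ≤ y := by linarith
  have hdvd : t ∣ x ∨ t ∣ y := by
    rcases ht with rfl | ht
    · exact .inl (one_dvd x)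
    · exact ht.dvd_or_dvd ⟨_, hprod⟩
  rcases hdvd with htx | hty
  · obtain ⟨u, v, rfl, rfl, rfl⟩ := exists_eq_mul_sq_and_eq_sq ht₀ hx₀ hy₀ hxy hprod htx
    refine ⟨u, v, add_comm _ _, rfl, ?_⟩
    rw [sq, sq, ← mul_assoc] at hxy
    exact hxy.of_mul_left_left.of_mul_right_left.symm
  · rw [mul_comm] at hprod
    obtain ⟨u, v, rfl, rfl, rfl⟩ := exists_eq_mul_sq_and_eq_sq ht₀ hy₀ hx₀ hxy.symm hprod hty
    refine ⟨u, v, rfl, rfl, ?_⟩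
    rw [sq, sq, ← mul_assoc] at hxy
    exact hxy.of_mul_left_left.of_mul_right_left

lemma exists_four_factors_of_mul_eq_mul {u w m n : ℤ} (hu : u ≠ 0) (h : u * w = m * n) :
    ∃ a b c d : ℤ, u = a * b ∧ w = c * d ∧ m = a * c ∧ n = b * d ∧ IsCoprime b c := by
  have hg := Int.gcd_pos_of_ne_zero_left m hu
  obtain ⟨b, c, hbc, hub, hmc⟩ := Int.exists_gcd_one hg
  have hco : IsCoprime b c := Int.isCoprime_iff_gcd_eq_one.2 hbc
  set g : ℤ := (Int.gcd u m : ℤ)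
  have hg₀ : g ≠ 0 := by positivity
  have hbw : b * w = c * n := mul_left_cancel₀ hg₀ (by linear_combination h - w * hub + n * hmc)
  obtain ⟨d, rfl⟩ : b ∣ n := hco.dvd_of_dvd_mul_left ⟨w, hbw.symm⟩
  have hb : b ≠ 0 := by
    rintro rfl
    exact hu (by rw [hub, zero_mul])
  have hw : w = c * d := mul_left_cancel₀ hb (by rw [hbw]; ring)
  exact ⟨g, b, c, d, by rw [hub, mul_comm], hw, by rw [hmc, mul_comm], rfl, hco⟩

lemma exists_common_factor_dvd_three {b c x y : ℤ} (hbc : IsCoprime b c) (hxy : IsCoprime x y)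
    (hx : x ≠ 0) (h : x * (b ^ 2 - c ^ 2) = y * (b ^ 2 - 4 * c ^ 2)) :
    ∃ e : ℤ, (e = 1 ∨ e = -1 ∨ e = 3 ∨ e = -3) ∧
      b ^ 2 - 4 * c ^ 2 = e * x ∧ b ^ 2 - c ^ 2 = e * y := by
  obtain ⟨e, he⟩ : x ∣ b ^ 2 - 4 * c ^ 2 := hxy.dvd_of_dvd_mul_left ⟨_, h.symm⟩
  have he' : b ^ 2 - c ^ 2 = e * y := mul_left_cancel₀ hx (by rw [h, he]; ring)
  rw [mul_comm x] at he
  obtain ⟨f, g, hfg⟩ : IsCoprime (b ^ 2) (c ^ 2) := hbc.pow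
  have hdvd : e ∣ 3 :=
    ⟨f * (4 * y - x) + g * (y - x), by
      linear_combination (4 * f + g) * he' - (f + g) * he - 3 * hfg⟩
  refine ⟨e, ?_, he, he'⟩
  have := (Nat.dvd_prime Nat.prime_three).1 (Int.natAbs_dvd_natAbs.2 hdvd)
  omega

lemma isCoprime_iff_of_sq_add_mul_sq_eq_sq {t x y z : ℤ} (h : x ^ 2 + t * y ^ 2 = z ^ 2) :
    IsCoprime x y ↔ IsCoprime z y := by
  rw [← IsCoprime.pow_left_iff two_pos, ← IsCoprime.pow_left_iff (x := z) two_pos, ← h,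
    show x ^ 2 + t * y ^ 2 = x ^ 2 + t * y * y by ring, IsCoprime.add_mul_right_left_iff]

lemma ne_zero_and_natAbs_lt_of_eq_two_mul {x k z : ℤ} (hx : x ≠ 0) (h : x = 2 * (k * z)) :
    z ≠ 0 ∧ z.natAbs < x.natAbs := by
  obtain ⟨-, hk, hz⟩ : (2 : ℤ) ≠ 0 ∧ k ≠ 0 ∧ z ≠ 0 := by simpa [h] using hx
  refine ⟨hz, ?_⟩
  rw [h, Int.natAbs_mul, Int.natAbs_mul]
  have := Int.natAbs_pos.2 hk
  have := Int.natAbs_pos.2 hz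
  change z.natAbs < 2 * (k.natAbs * z.natAbs)
  nlinarith

/-- A coprime solution of Euler's concordant forms problem for `p² + tq²` and `p² - 3tq²`, with `r`
and `s` their square roots. It encodes a nonzero double `2P` on `y² = x(x + t)(x - 3t)`, where
`x(2P) = (p / q)²`. The degenerate solution `q = 0`, `p = ±1` is allowed. -/
structure ConcordantSolution (t p q r s : ℤ) : Prop where
  isCoprime : IsCoprime p q
  add_eq : p ^ 2 + t * q ^ 2 = r ^ 2
  sub_eq : p ^ 2 - 3 * (t * q ^ 2) = s ^ 2

namespace ConcordantSolution

variable {t p q r s : ℤ}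

lemma even_right (h : ConcordantSolution t p q r s) (ht : Odd t) (ht₇ : t % 8 ≠ 7) : Even q := by
  by_contra hq
  rw [Int.not_even_iff_odd] at hq
  have htq : t * q ^ 2 % 8 = t % 8 := by
    obtain ⟨j, hj⟩ := Int.eight_dvd_sq_sub_one_of_odd hq
    rw [show t * q ^ 2 = t + 8 * (t * j) by linear_combination t * hj]
    omega
  have ht₂ := Int.odd_iff.1 ht
  have hp := sq_emod_sixteen_or_emod_eight p
  have hr := sq_emod_sixteen_or_emod_eight r
  have hs := sq_emod_sixteen_or_emod_eight s
  have := h.add_eq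
  have := h.sub_eq
  omega

lemma odd_left (h : ConcordantSolution t p q r s) (hq : Even q) : Odd p :=
  Int.isCoprime_two_right.1 (h.isCoprime.of_isCoprime_of_dvd_right hq.two_dvd)

lemma odd_add (h : ConcordantSolution t p q r s) (hq : Even q) : Odd r := by
  have hr : Odd (r ^ 2) :=
    h.add_eq ▸ (h.odd_left hq).pow.add_even ((hq.pow_of_ne_zero two_ne_zero).mul_left t)
  exact (Int.odd_pow' two_ne_zero).1 hr

lemma odd_sub (h : ConcordantSolution t p q r s) (hq : Even q) : Odd s := by
  have hs : Odd (s ^ 2) := h.sub_eq ▸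
    (h.odd_left hq).pow.sub_even (((hq.pow_of_ne_zero two_ne_zero).mul_left t).mul_left 3)
  exact (Int.odd_pow' two_ne_zero).1 hs

lemma isCoprime_add_right (h : ConcordantSolution t p q r s) : IsCoprime r q :=
  (isCoprime_iff_of_sq_add_mul_sq_eq_sq h.add_eq).1 h.isCoprime

lemma isCoprime_add_coeff (h : ConcordantSolution t p q r s) (ht : Squarefree t) :
    IsCoprime r t := by
  refine isCoprime_of_prime_dvd (fun h₀ ↦ ht.ne_zero h₀.2) fun l hl hlr hlt ↦ ?_
  have hlp : l ∣ p := hl.dvd_of_dvd_pow (n := 2) <| by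
    rw [eq_sub_of_add_eq h.add_eq]
    exact (dvd_pow hlr two_ne_zero).sub (hlt.mul_right _)
  have hll : l * l ∣ t * q ^ 2 := by
    rw [eq_sub_of_add_eq' h.add_eq, ← sq]
    exact (pow_dvd_pow_of_dvd hlr 2).sub (pow_dvd_pow_of_dvd hlp 2)
  have hlq : IsCoprime l q := h.isCoprime.of_isCoprime_of_dvd_left hlp
  exact hl.not_isUnit (ht l ((hlq.mul_left hlq).pow_right.dvd_of_dvd_mul_right hll))

lemma isCoprime_add_left (h : ConcordantSolution t p q r s) (ht : Squarefree t) :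
    IsCoprime r p := by
  have : IsCoprime r (-(t * q ^ 2) + r * r) :=
    ((h.isCoprime_add_coeff ht).mul_right h.isCoprime_add_right.pow_right).neg_right
      |>.add_mul_left_right r
  rw [← sq, ← h.add_eq, neg_add_cancel_comm_assoc] at this
  exact (IsCoprime.pow_right_iff two_pos).1 this

lemma isCoprime_add_sub (h : ConcordantSolution t p q r s) (ht : Squarefree t) (hr : Odd r) :
    IsCoprime r s := by
  have hr₂ : IsCoprime r (2 * 2) :=
    (Int.isCoprime_two_right.2 hr).mul_right (Int.isCoprime_two_right.2 hr)
  have : IsCoprime r (-(2 * 2 * (t * q ^ 2)) + r * r) :=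
    (hr₂.mul_right ((h.isCoprime_add_coeff ht).mul_right h.isCoprime_add_right.pow_right)).neg_right
      |>.add_mul_left_right r
  rw [show -(2 * 2 * (t * q ^ 2)) + r * r = s ^ 2 by linear_combination h.sub_eq - h.add_eq] at this
  exact (IsCoprime.pow_right_iff two_pos).1 this

lemma abs_add (h : ConcordantSolution t p q r s) : ConcordantSolution t p q |r| s where
  isCoprime := h.isCoprime
  add_eq := h.add_eq.trans (sq_abs r).symm
  sub_eq := h.sub_eq

lemma exists_factorization (h : ConcordantSolution t p q r s) (ht : t = 1 ∨ Prime t)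
    (ht₀ : 0 < t) (ht₂ : Odd t) (ht₇ : t % 8 ≠ 7) :
    ∃ u v m n : ℤ, q = u * v ∧ u * v = 2 * (m * n) ∧
      u ^ 2 + t * v ^ 2 = m ^ 2 + t * n ^ 2 ∧ IsCoprime u (t * v) := by
  wlog hr₀ : 0 ≤ r generalizing r
  · exact this h.abs_add (abs_nonneg r)
  have hsqf : Squarefree t := by
    rcases ht with rfl | ht
    · exact squarefree_one
    · exact ht.irreducible.squarefree
  have hq := h.even_right ht₂ ht₇
  have hr := h.odd_add hq
  obtain ⟨u, v, hruv, hquv, huv⟩ := exists_eq_sq_add_mul_sq (c := q) ht ht₀ hr₀ hr (h.odd_sub hq)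
    (h.isCoprime_add_sub hsqf hr) (by linear_combination h.sub_eq - h.add_eq)
  obtain ⟨k, hk⟩ := hq.two_dvd
  obtain ⟨m, n, hrmn, hkmn, -⟩ := exists_eq_sq_add_mul_sq (c := k) ht ht₀ hr₀ hr (h.odd_left hq)
    (h.isCoprime_add_left hsqf) (by rw [← h.add_eq, hk]; ring)
  exact ⟨u, v, m, n, hquv, by rw [← hquv, hk, hkmn], hruv.symm.trans hrmn, huv⟩

end ConcordantSolution

lemma exists_of_even_right {t u v m n : ℤ} (huv : IsCoprime u (t * v)) (hv : Even v)
    (hprod : u * v = 2 * (m * n)) (hsum : u ^ 2 + t * v ^ 2 = m ^ 2 + t * n ^ 2) :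
    ∃ a b c d : ℤ, u * v = 2 * (a * b * c * d) ∧ IsCoprime b c ∧ IsCoprime a (t * d) ∧
      (c ^ 2 + t * d ^ 2 = a ^ 2 ∧ c ^ 2 - 3 * (t * d ^ 2) = b ^ 2 ∨
        c ^ 2 + t * d ^ 2 = b ^ 2 ∧ t * d ^ 2 - 3 * c ^ 2 = a ^ 2) := by
  obtain ⟨w, rfl⟩ := hv.two_dvd
  have hu : Odd u := Int.isCoprime_two_right.1 huv.of_mul_right_right.of_mul_right_left
  obtain ⟨a, b, c, d, rfl, rfl, rfl, rfl, hbc⟩ :=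
    exists_four_factors_of_mul_eq_mul (by rintro rfl; simp at hu) (by linarith : u * w = m * n)
  obtain ⟨ha, hb⟩ := Int.odd_mul.1 hu
  have had : IsCoprime a (t * d) := by
    have hatv := huv.of_mul_left_left
    have hacd : IsCoprime a (c * d) := hatv.of_mul_right_right.of_mul_right_right
    exact hatv.of_mul_right_left.mul_right hacd.of_mul_right_right
  refine ⟨a, b, c, d, by ring, hbc, had, ?_⟩
  have hco : IsCoprime (a ^ 2) (t * d ^ 2) :=
    (had.of_mul_right_left.mul_right had.of_mul_right_right.pow_right).pow_left
  have ha₀ : a ^ 2 ≠ 0 := pow_ne_zero 2 (by rintro rfl; simp at ha)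
  obtain ⟨e, he, h₄, h₁⟩ := exists_common_factor_dvd_three hbc hco ha₀
    (by linear_combination hsum)
  -- Modulo `4` only `e = 1` and `e = -3` are compatible with `a` and `b` being odd.
  have ha₄ := Int.sq_mod_four_eq_one_of_odd ha
  have hb₄ := Int.sq_mod_four_eq_one_of_odd hb
  rcases he with rfl | rfl | rfl | rfl
  · exact .inr ⟨by linarith, by linarith⟩
  · omega
  · omega
  · exact .inl ⟨by linarith, by linarith⟩

lemma not_even_left_of_three {u v m n : ℤ} (huv : IsCoprime u (3 * v))
    (hprod : u * v = 2 * (m * n)) (hsum : u ^ 2 + 3 * v ^ 2 = m ^ 2 + 3 * n ^ 2) : ¬ Even u := by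
  intro hu
  obtain ⟨w, rfl⟩ := hu.two_dvd
  have hv : Odd v := Int.isCoprime_two_left.1 huv.of_mul_right_right.of_mul_left_left
  have hw₃ : IsCoprime w 3 := huv.of_mul_left_right.of_mul_right_left
  obtain ⟨a, b, c, d, rfl, rfl, rfl, rfl, hbc⟩ := exists_four_factors_of_mul_eq_mul
    (by rintro rfl; norm_num [isCoprime_zero_left, Int.isUnit_iff] at hw₃)
    (by linarith : w * v = m * n)
  obtain ⟨hc, hd⟩ := Int.odd_mul.1 hv
  have ha₃ : IsCoprime (a ^ 2) 3 := hw₃.of_mul_left_left.pow_left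
  have had : IsCoprime a d :=
    huv.of_mul_left_right.of_mul_left_left.of_mul_right_right.of_mul_right_right
  have hd₀ : 3 * d ^ 2 ≠ 0 := mul_ne_zero three_ne_zero (pow_ne_zero 2 (by rintro rfl; simp at hd))
  obtain ⟨e, he, h₄, h₁⟩ := exists_common_factor_dvd_three hbc.symm
    (ha₃.symm.mul_left had.symm.pow) hd₀ (by linear_combination hsum)
  have hc₈ := Int.eight_dvd_sq_sub_one_of_odd hc
  have hd₈ := Int.eight_dvd_sq_sub_one_of_odd hd
  have ha := sq_emod_sixteen_or_emod_eight a
  have hb := sq_emod_sixteen_or_emod_eight b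
  have ha' : ¬ 3 ∣ a ^ 2 := fun h ↦
    Int.prime_three.not_isUnit (ha₃.isUnit_of_dvd' h dvd_rfl)
  -- The value `e = -1` is excluded modulo `3`, the other three modulo `8`.
  rcases he with rfl | rfl | rfl | rfl <;> omega

namespace ConcordantSolution

variable {t p q r s : ℤ}

lemma exists_smaller_of_even_right {u v m n : ℤ} (ht : t = 1 ∨ t = 3)
    (huv : IsCoprime u (t * v)) (hv : Even v) (hprod : u * v = 2 * (m * n))
    (hsum : u ^ 2 + t * v ^ 2 = m ^ 2 + t * n ^ 2) (h₀ : u * v ≠ 0) :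
    ∃ p q r s : ℤ, ConcordantSolution t p q r s ∧ q ≠ 0 ∧ q.natAbs < (u * v).natAbs := by
  obtain ⟨a, b, c, d, habcd, hbc, had, ⟨hadd, hsub⟩ | ⟨hadd, hsub⟩⟩ :=
    exists_of_even_right huv hv hprod hsum
  · have hcd : IsCoprime c d :=
      (isCoprime_iff_of_sq_add_mul_sq_eq_sq hadd).2 had.of_mul_right_right
    exact ⟨c, d, a, b, ⟨hcd, hadd, hsub⟩, ne_zero_and_natAbs_lt_of_eq_two_mul h₀ habcd⟩
  · rcases ht with rfl | rfl
    · have hadd' : d ^ 2 + 1 * c ^ 2 = b ^ 2 := by linarith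
      have hdc : IsCoprime d c := (isCoprime_iff_of_sq_add_mul_sq_eq_sq hadd').2 hbc
      exact ⟨d, c, b, a, ⟨hdc, hadd', by linarith⟩,
        ne_zero_and_natAbs_lt_of_eq_two_mul (k := a * b * d) h₀ (by rw [habcd]; ring)⟩
    · have h₃ : 3 ∣ a ^ 2 := ⟨d ^ 2 - c ^ 2, by linarith⟩
      exact absurd (had.of_mul_right_left.pow_left.isUnit_of_dvd' h₃ dvd_rfl)
        Int.prime_three.not_isUnit

lemma exists_smaller (h : ConcordantSolution t p q r s) (ht : t = 1 ∨ t = 3) (hq : q ≠ 0) :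
    ∃ p' q' r' s' : ℤ, ConcordantSolution t p' q' r' s' ∧ q' ≠ 0 ∧ q'.natAbs < q.natAbs := by
  obtain ⟨u, v, m, n, rfl, hprod, hsum, huv⟩ : ∃ u v m n : ℤ, q = u * v ∧ u * v = 2 * (m * n) ∧
      u ^ 2 + t * v ^ 2 = m ^ 2 + t * n ^ 2 ∧ IsCoprime u (t * v) := by
    rcases ht with rfl | rfl
    · exact h.exists_factorization (.inl rfl) one_pos odd_one (by norm_num)
    · exact h.exists_factorization (.inr Int.prime_three) three_pos (by decide) (by norm_num)
  have heven : Even u ∨ Even v := Int.even_mul.1 (hprod ▸ even_two_mul _)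
  rcases heven with hu | hv
  · rcases ht with rfl | rfl
    · rw [mul_comm u v] at hprod hq ⊢
      exact exists_smaller_of_even_right (m := m) (n := n) (.inl rfl)
        (by simpa using (one_mul v ▸ huv).symm) hu hprod (by linarith) hq
    · exact absurd hu (not_even_left_of_three huv hprod hsum)
  · exact exists_smaller_of_even_right ht huv hv hprod hsum hq

theorem right_eq_zero (h : ConcordantSolution t p q r s) (ht : t = 1 ∨ t = 3) : q = 0 := by
  induction hN : q.natAbs using Nat.strong_induction_on generalizing p q r s with
  | _ N ih =>
    by_contra hq
    obtain ⟨p', q', r', s', h', hq', hlt⟩ := h.exists_smaller ht hq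
    exact hq' (ih _ (hN ▸ hlt) h' rfl)

end ConcordantSolution

lemma exists_concordantSolution_of_rat {t : ℤ} {A B C : ℚ} (hB : A ^ 2 + t = B ^ 2)
    (hC : A ^ 2 - 3 * t = C ^ 2) : ∃ r s : ℤ, ConcordantSolution t A.num A.den r s := by
  have hA : A * A.den = A.num := A.mul_den_eq_num
  have exists_int_sqrt {z : ℤ} {D : ℚ} (h : (z : ℚ) = D ^ 2) : ∃ r : ℤ, z = r ^ 2 := by
    obtain ⟨r, hr⟩ := Rat.isSquare_intCast_iff.1 ⟨D, h.trans (sq D)⟩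
    exact ⟨r, hr.trans (sq r).symm⟩
  obtain ⟨r, hr⟩ := exists_int_sqrt (z := A.num ^ 2 + t * (A.den : ℤ) ^ 2) (D := B * A.den) <| by
    push_cast
    rw [← hA]
    linear_combination (A.den : ℚ) ^ 2 * hB
  obtain ⟨s, hs⟩ := exists_int_sqrt (z := A.num ^ 2 - 3 * (t * (A.den : ℤ) ^ 2))
    (D := C * A.den) <| by
    push_cast
    rw [← hA]
    linear_combination (A.den : ℚ) ^ 2 * hC
  exact ⟨r, s, A.isCoprime_num_den, hr, hs⟩

theorem eq_zero_of_mul_sq_eq {t : ℤ} (ht : t = 1 ∨ t = 3) {x y : ℚ}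
    (h : t * y ^ 2 = x ^ 3 - 2 * x ^ 2 - 3 * x) : y = 0 := by
  by_contra hy
  -- The duplication formula: square roots of `x`, `x + t`, `x - 3t` at the double of `(t x, t² y)`.
  obtain ⟨r, s, hsol⟩ := exists_concordantSolution_of_rat (t := t) (A := (x ^ 2 + 3) / (2 * y))
    (B := (x ^ 2 + 2 * x - 3) / (2 * y)) (C := (x ^ 2 - 6 * x - 3) / (2 * y))
    (by field_simp; linear_combination 4 * h) (by field_simp; linear_combination -12 * h)
  exact Rat.den_ne_zero _ (Int.natCast_eq_zero.1 (hsol.right_eq_zero ht))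

lemma two_ne_zero_of_algebra (F : Type*) {K : Type*} [Field F] [Field K] [Algebra F K]
    [NeZero (2 : F)] : (2 : K) ≠ 0 :=
  map_ofNat (algebraMap F K) 2 ▸ (map_ne_zero _).2 two_ne_zero

section Quadratic

open Polynomial

variable {F L : Type*} [Field F] [Field L] [Algebra F L] {α : L} {d : F}

lemma minpoly_eq_X_sq_sub_C (hα : α ^ 2 = algebraMap F L d) (hd : ¬ IsSquare d) :
    minpoly F α = X ^ 2 - C d := by
  refine (minpoly.eq_of_irreducible_of_monic ?_ (by simp [hα])
    (monic_X_pow_sub_C d two_ne_zero)).symm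
  exact X_pow_sub_C_irreducible_of_prime Nat.prime_two fun b hb ↦ hd ⟨b, by rw [← hb, sq]⟩

lemma isIntegral_of_sq_eq (hα : α ^ 2 = algebraMap F L d) : IsIntegral F α :=
  .of_pow two_pos (hα ▸ isIntegral_algebraMap)

lemma exists_eq_add_mul_gen (hα : α ^ 2 = algebraMap F L d) (hd : ¬ IsSquare d) (z : F⟮α⟯) :
    ∃ a b : F, z = algebraMap F F⟮α⟯ a + algebraMap F F⟮α⟯ b * AdjoinSimple.gen F α := by
  have hint := isIntegral_of_sq_eq hα
  obtain ⟨f, hf, rfl⟩ := (adjoin.powerBasis hint).exists_eq_aeval z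
  rw [adjoin.powerBasis_dim, minpoly_eq_X_sq_sub_C hα hd, natDegree_X_pow_sub_C] at hf
  obtain ⟨b, a, rfl⟩ := exists_eq_X_add_C_of_natDegree_le_one (Nat.le_of_lt_succ hf)
  exact ⟨a, b, by simp [adjoin.powerBasis_gen, add_comm]⟩

lemma gen_sq_eq (hα : α ^ 2 = algebraMap F L d) :
    AdjoinSimple.gen F α ^ 2 = algebraMap F F⟮α⟯ d :=
  Subtype.ext (by simpa using hα)

lemma exists_algHom_gen_eq_neg (hα : α ^ 2 = algebraMap F L d) (hd : ¬ IsSquare d) :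
    ∃ σ : F⟮α⟯ →ₐ[F] F⟮α⟯, σ (AdjoinSimple.gen F α) = -AdjoinSimple.gen F α := by
  have hint := isIntegral_of_sq_eq hα
  have hroot : aeval (-AdjoinSimple.gen F α) (minpoly F (adjoin.powerBasis hint).gen) = 0 := by
    rw [adjoin.powerBasis_gen, minpoly_gen, minpoly_eq_X_sq_sub_C hα hd]
    simp [gen_sq_eq hα]
  exact ⟨(adjoin.powerBasis hint).lift _ hroot, (adjoin.powerBasis hint).lift_gen _ hroot⟩

variable {σ : F⟮α⟯ →ₐ[F] F⟮α⟯}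

lemma involutive_of_gen_eq_neg (hα : α ^ 2 = algebraMap F L d) (hd : ¬ IsSquare d)
    (hσ : σ (AdjoinSimple.gen F α) = -AdjoinSimple.gen F α) : Function.Involutive σ := by
  intro z
  obtain ⟨a, b, rfl⟩ := exists_eq_add_mul_gen hα hd z
  simp [hσ]

lemma exists_eq_algebraMap_of_conj_eq [NeZero (2 : F)] (hα : α ^ 2 = algebraMap F L d)
    (hd : ¬ IsSquare d) (hσ : σ (AdjoinSimple.gen F α) = -AdjoinSimple.gen F α) {z : F⟮α⟯}
    (hz : σ z = z) : ∃ a : F, z = algebraMap F F⟮α⟯ a := by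
  obtain ⟨a, b, rfl⟩ := exists_eq_add_mul_gen hα hd z
  simp only [map_add, map_mul, AlgHom.commutes, hσ] at hz
  refine ⟨a, mul_left_cancel₀ (two_ne_zero_of_algebra F) ?_⟩
  linear_combination -hz

lemma exists_eq_algebraMap_mul_gen_of_conj_eq_neg [NeZero (2 : F)]
    (hα : α ^ 2 = algebraMap F L d) (hd : ¬ IsSquare d)
    (hσ : σ (AdjoinSimple.gen F α) = -AdjoinSimple.gen F α) {z : F⟮α⟯} (hz : σ z = -z) :
    ∃ b : F, z = algebraMap F F⟮α⟯ b * AdjoinSimple.gen F α := by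
  obtain ⟨a, b, rfl⟩ := exists_eq_add_mul_gen hα hd z
  simp only [map_add, map_mul, AlgHom.commutes, hσ] at hz
  refine ⟨b, mul_left_cancel₀ (two_ne_zero_of_algebra F) ?_⟩
  linear_combination hz

end Quadratic

lemma two_mul_nsmul_eq_zero_of_involutive {A : Type*} [AddCommGroup A] {τ : A →+ A} {n : ℕ}
    (hτ : Function.Involutive τ) (hfix : ∀ a, τ a = a → n • a = 0)
    (hanti : ∀ a, τ a = -a → n • a = 0) (a : A) : (2 * n) • a = 0 := by
  have hadd : n • (a + τ a) = 0 := hfix _ (by rw [map_add, hτ, add_comm])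
  have hsub : n • (a - τ a) = 0 := hanti _ (by rw [map_sub, hτ, neg_sub])
  calc (2 * n) • a = n • (a + τ a) + n • (a - τ a) := by
        rw [← nsmul_add, add_add_sub_cancel, ← two_nsmul, mul_nsmul]
    _ = 0 := by rw [hadd, hsub, add_zero]

lemma two_nsmul_some_eq_zero_iff {F : Type*} [Field F] [DecidableEq F]
    {W : WeierstrassCurve.Affine F} {x y : F} (h : W.Nonsingular x y) :
    2 • WeierstrassCurve.Affine.Point.some x y h = 0 ↔ y = W.negY x y := by
  rw [two_nsmul, add_eq_zero_iff_eq_neg, WeierstrassCurve.Affine.Point.neg_some,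
    WeierstrassCurve.Affine.Point.some.injEq, and_iff_right rfl]

/-- The curve `E_{1,2π/3} : y² = x³ - 2x² - 3x`. It is defined over `ℚ`, so that automorphisms of an
extension `K` of `ℚ` act on its `K`-points. -/
def thetaCurve : WeierstrassCurve.Affine ℚ :=
  { a₁ := 0, a₂ := -2, a₃ := 0, a₄ := -3, a₆ := 0 }

namespace thetaCurve

open WeierstrassCurve WeierstrassCurve.Affine

section

variable {K : Type*} [Field K] [Algebra ℚ K]

lemma equation_iff {x y : K} :
    (thetaCurve⁄K).Equation x y ↔ y ^ 2 = x ^ 3 - 2 * x ^ 2 - 3 * x := by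
  simp [Affine.equation_iff, thetaCurve, sub_eq_add_neg]

lemma negY_eq (x y : K) : (thetaCurve⁄K).negY x y = -y := by
  simp [Affine.negY, thetaCurve]

lemma nonsingular_of_equation {x y : K} (h : (thetaCurve⁄K).Equation x y) (hy : y ≠ 0) :
    (thetaCurve⁄K).Nonsingular x y := by
  have := algebraRat.charZero K
  refine (Affine.nonsingular_iff ..).2 ⟨h, .inr ?_⟩
  rwa [← Affine.negY, negY_eq, ne_eq, self_eq_neg]

variable [DecidableEq K]

lemma two_nsmul_some_eq_zero_iff {x y : K} (h : (thetaCurve⁄K).Nonsingular x y) :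
    2 • Point.some x y h = 0 ↔ y = 0 := by
  have := algebraRat.charZero K
  rw [_root_.two_nsmul_some_eq_zero_iff, negY_eq, self_eq_neg]

lemma two_nsmul_some_eq_zero_of_rat {t : ℤ} (ht : t = 1 ∨ t = 3) {w x y : K}
    (hw : w ^ 2 = t) {a b : ℚ} (hx : x = algebraMap ℚ K a) (hy : y = algebraMap ℚ K b * w)
    (h : (thetaCurve⁄K).Nonsingular x y) : 2 • Point.some x y h = 0 := by
  have hab : t * b ^ 2 = a ^ 3 - 2 * a ^ 2 - 3 * a := by
    apply (algebraMap ℚ K).injective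
    have := equation_iff.1 h.1
    rw [hx, hy, mul_pow, hw] at this
    simp only [map_mul, map_sub, map_pow, map_ofNat, map_intCast]
    linear_combination this
  rw [two_nsmul_some_eq_zero_iff, hy, eq_zero_of_mul_sq_eq ht hab, map_zero, zero_mul]

end

lemma sqrt_three_sq : √3 ^ 2 = algebraMap ℚ ℝ 3 := by simp

lemma not_isSquare_three : ¬ IsSquare (3 : ℚ) := by
  exact_mod_cast Rat.isSquare_natCast_iff.not.2 Nat.prime_three.prime.irreducible.not_isSquare

lemma four_nsmul_eq_zero (P : (thetaCurve⁄ℚ⟮√3⟯).Point) : 4 • P = 0 := by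
  obtain ⟨σ, hσ⟩ := exists_algHom_gen_eq_neg sqrt_three_sq not_isSquare_three
  refine two_mul_nsmul_eq_zero_of_involutive (n := 2) (τ := Point.map σ) ?_ ?_ ?_ P
  · rintro (_ | ⟨x, y, h⟩)
    · rfl
    · have hσσ := involutive_of_gen_eq_neg sqrt_three_sq not_isSquare_three hσ
      simp [Point.map_some, hσσ x, hσσ y]
  · rintro (_ | ⟨x, y, h⟩) hP
    · exact smul_zero 2
    · rw [Point.map_some, Point.some.injEq] at hP
      obtain ⟨a, hx⟩ := exists_eq_algebraMap_of_conj_eq sqrt_three_sq not_isSquare_three hσ hP.1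
      obtain ⟨b, hy⟩ := exists_eq_algebraMap_of_conj_eq sqrt_three_sq not_isSquare_three hσ hP.2
      exact two_nsmul_some_eq_zero_of_rat (.inl rfl) (w := 1) (by simp) hx
        (by rw [hy, mul_one]) h
  · rintro (_ | ⟨x, y, h⟩) hP
    · exact smul_zero 2
    · rw [Point.map_some, Point.neg_some, Point.some.injEq, negY_eq] at hP
      obtain ⟨a, hx⟩ := exists_eq_algebraMap_of_conj_eq sqrt_three_sq not_isSquare_three hσ hP.1
      obtain ⟨b, hy⟩ :=
        exists_eq_algebraMap_mul_gen_of_conj_eq_neg sqrt_three_sq not_isSquare_three hσ hP.2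
      exact two_nsmul_some_eq_zero_of_rat (.inr rfl) (by simp [gen_sq_eq sqrt_three_sq]) hx hy h

lemma exists_two_nsmul_ne_zero {K : Type*} [Field K] [Algebra ℚ K] [DecidableEq K] {w : K}
    (hw : w ^ 2 = 3) : ∃ P : (thetaCurve⁄K).Point, 2 • P ≠ 0 := by
  have := algebraRat.charZero K
  have hy : 6 + 4 * w ≠ 0 := by
    intro h
    have : (12 : K) = 0 := by linear_combination (4 * w - 6) * h - 16 * hw
    norm_num at this
  have heq : (thetaCurve⁄K).Equation (3 + 2 * w) (6 + 4 * w) :=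
    equation_iff.2 (by linear_combination (-12 - 8 * w) * hw)
  exact ⟨.some _ _ (nonsingular_of_equation heq hy),
    (two_nsmul_some_eq_zero_iff _).not.2 hy⟩

end thetaCurve

/-- Over `K = ℚ(√3)`, the elliptic curve `E : y² = x³ − 2x² − 3x = x(x+1)(x−3)`
has a `K`-point `P` with `2P ≠ 0`, but every `K`-point has finite order. Hence `n = 1` is
`(ℚ(√3), 2π/3)`-congruent but not properly `(ℚ(√3), 2π/3)`-congruent. -/
theorem one_is_congruent_but_not_properly_over_sqrt_three
    (W : WeierstrassCurve.Affine ℚ⟮Real.sqrt 3⟯)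
    (hW : W = { a₁ := 0, a₂ := -2, a₃ := 0, a₄ := -3, a₆ := 0 }) :
    (∃ P : W.Point, 2 • P ≠ 0) ∧ (∀ P : W.Point, IsOfFinAddOrder P) := by
  obtain rfl : W = thetaCurve.baseChange ℚ⟮√3⟯ := by
    rw [hW]
    ext <;> simp [thetaCurve]
  exact ⟨thetaCurve.exists_two_nsmul_ne_zero (w := AdjoinSimple.gen ℚ √3)
      (by simp [gen_sq_eq thetaCurve.sqrt_three_sq]),
    fun P ↦ isOfFinAddOrder_iff_nsmul_eq_zero.2 ⟨4, four_pos, thetaCurve.four_nsmul_eq_zero P⟩⟩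
end

section
/- Let K = ℚ(√13) and let E be the elliptic curve over K given by y² = x(x + 9)(x − 3). Then E(K) contains a point of infinite order; that is, n = 3 is a properly (ℚ(√13), π/3)-congruent number. Moreover, the elements u = √13/2, v = 24√13/13, w = 43√13/26 of K satisfy w² = u² + v² − uv and uv = 12, so (u, v, w) is a (ℚ(√13), π/3)-triangle of area 3√3. -/
open IntermediateField

/-!
A triangle with sides `u`, `v`, `w` gives the point with `x = (w / 2) ^ 2` on the curve
`y ^ 2 = x * (x + (r + s) * n) * (x - (r - s) * n)`, since the law of cosines turns the factors
into the squares `x - (r - s) * n = ((u - v) / 2) ^ 2` and `x + (r + s) * n = ((u + v) / 2) ^ 2`.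
For a valuation `ν` with `ν 2 < 1`, the duplication formula has a numerator of valuation `ν x ^ 4`
and a denominator of valuation `ν 4 * ν x ^ 3` as soon as `1 < ν x`. Doubling therefore multiplies
`ν x` by `(ν 4)⁻¹ > 1`, and the points `2 ^ k • P` are pairwise distinct. Over a field of
characteristic zero in which `13 = σ ^ 2`, a valuation above `2` exists, and it gives
`w / 2 = 43 * σ / 52` the valuation `(ν 4)⁻¹ > 1`.
-/

theorem not_isOfFinAddOrder_of_lt_nsmul {A Γ : Type*} [AddMonoid A] [Preorder Γ] {h : A → Γ}
    {c : Γ} {m : ℕ} (h_lt : ∀ Q, c < h Q → h Q < h (m • Q)) {P : A} (hP : c < h P) :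
    ¬ IsOfFinAddOrder P := by
  have lt_height (k : ℕ) : c < h (m ^ k • P) := by
    induction k with
    | zero => simpa using hP
    | succ k ih => simpa only [pow_succ', mul_nsmul'] using ih.trans (h_lt _ ih)
  have height_strictMono : StrictMono fun k : ℕ ↦ h (m ^ k • P) :=
    strictMono_nat_of_lt_succ fun k ↦ by
      simpa only [pow_succ', mul_nsmul'] using h_lt _ (lt_height k)
  have multiples_injective : Function.Injective fun k : ℕ ↦ m ^ k • P :=
    Function.Injective.of_comp (f := h) height_strictMono.injective
  intro hfin
  refine Set.infinite_range_of_injective multiples_injective (hfin.finite_multiples.subset ?_)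
  rintro _ ⟨k, rfl⟩
  exact ⟨m ^ k, rfl⟩

section Valuation

theorem exists_valuationSubring_valuation_intCast_lt_one (K : Type*) [Field K] [CharZero K]
    {p : ℤ} (hp : ¬ IsUnit p) : ∃ B : ValuationSubring K, B.valuation (p : K) < 1 := by
  let Z : Subring K := (Int.castRingHom K).range
  have span_ne_top : Ideal.span {(p : Z)} ≠ ⊤ := by
    rw [Ne, Ideal.span_singleton_eq_top, isUnit_iff_exists_inv]
    rintro ⟨⟨_, q, rfl⟩, hpq⟩
    have hpq' : (p : K) * q = 1 := congrArg Subtype.val hpq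
    exact hp (.of_mul_eq_one q (by exact_mod_cast hpq'))
  obtain ⟨B, -, hB⟩ := Ideal.image_subset_nonunits_valuationSubring _ span_ne_top
  exact ⟨B, B.mem_nonunits_iff.1 (hB ⟨_, Ideal.mem_span_singleton_self _, rfl⟩)⟩

variable {R Γ₀ : Type*} [Ring R] [LinearOrderedCommGroupWithZero Γ₀] (ν : Valuation R Γ₀)

theorem valuation_intCast_le_one (m : ℤ) : ν m ≤ 1 :=
  intCast_mem ν.integer m

theorem valuation_intCast_eq_one_of_odd (two_lt : ν 2 < 1) {m : ℤ} (hm : Odd m) : ν m = 1 := by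
  obtain ⟨k, rfl⟩ := hm
  have even_lt_one : ν (2 * k) < 1 := by
    rw [map_mul]
    exact mul_lt_one_of_lt_of_le two_lt (valuation_intCast_le_one ν k)
  push_cast
  rw [ν.map_add_eq_of_lt_right (by rwa [map_one]), map_one]

theorem valuation_four_lt_one (two_lt : ν 2 < 1) : ν 4 < 1 := by
  have four_eq : (4 : R) = 2 * 2 := by norm_num
  rw [four_eq, map_mul]
  exact mul_lt_one_of_lt_of_le two_lt two_lt.le

variable {ν} in
/-- A Horner step for monic polynomials with integral coefficients. -/
theorem valuation_mul_add_eq_pow_succ {x t c : R} {k : ℕ} (hx : 1 < ν x) (ht : ν t = ν x ^ k)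
    (hc : ν c ≤ 1) : ν (x * t + c) = ν x ^ (k + 1) := by
  have leading_term : ν (x * t) = ν x ^ (k + 1) := by rw [map_mul, ht, pow_succ']
  rw [ν.map_add_eq_of_lt_left, leading_term]
  rw [leading_term]
  exact hc.trans_lt (one_lt_pow₀ hx k.succ_ne_zero)

theorem valuation_mul_div_eq_one_of_odd {K : Type*} [Field K] {ν : Valuation K Γ₀}
    (two_lt : ν 2 < 1) {a b d : ℤ} (ha : Odd a) (hb : Odd b) (hd : Odd d) {σ : K}
    (hσ : σ ^ 2 = d) : ν (a * σ / b) = 1 := by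
  have valuation_σ : ν σ = 1 := by
    rw [← pow_eq_one_iff_of_nonneg zero_le two_ne_zero, ← map_pow, hσ,
      valuation_intCast_eq_one_of_odd ν two_lt hd]
  rw [map_div₀, map_mul, valuation_σ, valuation_intCast_eq_one_of_odd ν two_lt ha,
    valuation_intCast_eq_one_of_odd ν two_lt hb, one_mul, div_one]

end Valuation

section Doubling

variable {K Γ₀ : Type*} [Field K] [LinearOrderedCommGroupWithZero Γ₀]
  {W : WeierstrassCurve.Affine K}

theorem duplication_formula [DecidableEq K] {x y : K} (h : W.Equation x y) (hy : y ≠ W.negY x y) :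
    W.addX x x (W.slope x x y y) * (y - W.negY x y) ^ 2 =
      x ^ 4 - W.b₄ * x ^ 2 - 2 * W.b₆ * x - W.b₈ := by
  rw [WeierstrassCurve.Affine.slope_of_Y_ne rfl hy, WeierstrassCurve.Affine.addX]
  have hy' := sub_ne_zero.2 hy
  have heq := (W.equation_iff x y).1 h
  field_simp
  simp only [WeierstrassCurve.Affine.negY, WeierstrassCurve.b₄, WeierstrassCurve.b₆,
    WeierstrassCurve.b₈]
  linear_combination -(W.a₁ ^ 2 + 4 * W.a₂ + 8 * x) * heq

/-- The valuation of the `x`-coordinate of an affine point, used through the condition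
`1 < xValuation ν P`; the point at infinity, where `x` has a pole, gets the value `0`, which
excludes it from that condition. -/
def xValuation (ν : Valuation K Γ₀) : W.Point → Γ₀
  | .zero => 0
  | .some x _ _ => ν x

variable {ν : Valuation K Γ₀} [WeierstrassCurve.IsIntegral ν.integer W]

theorem valuation_duplication_numerator {x : K} (hx : 1 < ν x) :
    ν (x ^ 4 - W.b₄ * x ^ 2 - 2 * W.b₆ * x - W.b₈) = ν x ^ 4 := by
  have hb₄ : W.b₄ ∈ ν.integer := W.integralModel_b₄_eq ν.integer ▸ Subtype.prop _
  have hb₆ : W.b₆ ∈ ν.integer := W.integralModel_b₆_eq ν.integer ▸ Subtype.prop _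
  have hb₈ : W.b₈ ∈ ν.integer := W.integralModel_b₈_eq ν.integer ▸ Subtype.prop _
  have horner_form : x ^ 4 - W.b₄ * x ^ 2 - 2 * W.b₆ * x - W.b₈ =
      x * (x * (x * (x * 1 + 0) + -W.b₄) + -(2 * W.b₆)) + -W.b₈ := by ring
  rw [horner_form]
  exact valuation_mul_add_eq_pow_succ hx (valuation_mul_add_eq_pow_succ hx
    (valuation_mul_add_eq_pow_succ hx (valuation_mul_add_eq_pow_succ (k := 0) hx (by simp)
      (by simp)) (neg_mem hb₄)) (neg_mem (mul_mem (ofNat_mem _ 2) hb₆))) (neg_mem hb₈)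

variable [W.IsCharNeTwoNF]

theorem valuation_y_sq_eq_x_cube {x y : K} (h : W.Equation x y) (hx : 1 < ν x) :
    ν y ^ 2 = ν x ^ 3 := by
  have ha₂ : W.a₂ ∈ ν.integer := W.integralModel_a₂_eq ν.integer ▸ Subtype.prop _
  have ha₄ : W.a₄ ∈ ν.integer := W.integralModel_a₄_eq ν.integer ▸ Subtype.prop _
  have ha₆ : W.a₆ ∈ ν.integer := W.integralModel_a₆_eq ν.integer ▸ Subtype.prop _
  have horner_form : y ^ 2 = x * (x * (x * 1 + W.a₂) + W.a₄) + W.a₆ := by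
    have heq := (W.equation_iff x y).1 h
    rw [W.a₁_of_isCharNeTwoNF, W.a₃_of_isCharNeTwoNF] at heq
    linear_combination heq
  rw [← map_pow, horner_form]
  exact valuation_mul_add_eq_pow_succ hx (valuation_mul_add_eq_pow_succ hx
    (valuation_mul_add_eq_pow_succ (k := 0) hx (by simp) ha₂) ha₄) ha₆

theorem y_ne_negY_of_one_lt_valuation_x (two_ne : (2 : K) ≠ 0) {x y : K} (h : W.Equation x y)
    (hx : 1 < ν x) : y ≠ W.negY x y := by
  have hy : y ≠ 0 := by
    rintro rfl
    have x_cube_eq_zero := valuation_y_sq_eq_x_cube h hx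
    rw [map_zero, zero_pow two_ne_zero] at x_cube_eq_zero
    exact (pow_pos (zero_lt_one.trans hx) 3).ne x_cube_eq_zero
  simpa [WeierstrassCurve.Affine.negY, eq_neg_iff_add_eq_zero, ← two_mul, two_ne] using hy

theorem nonsingular_of_one_lt_valuation_x (two_ne : (2 : K) ≠ 0) {x y : K}
    (h : W.Equation x y) (hx : 1 < ν x) : W.Nonsingular x y :=
  (W.nonsingular_iff x y).2 ⟨h, .inr (y_ne_negY_of_one_lt_valuation_x two_ne h hx)⟩

theorem xValuation_two_nsmul_mul [DecidableEq K] (two_ne : (2 : K) ≠ 0) {P : W.Point}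
    (hP : 1 < xValuation ν P) : xValuation ν (2 • P) * ν 4 = xValuation ν P := by
  rcases P with _ | ⟨x, y, h⟩
  · exact absurd hP not_lt_zero
  have hx : 1 < ν x := hP
  have hy : y ≠ W.negY x y := y_ne_negY_of_one_lt_valuation_x two_ne h.1 hx
  have two_y : y - W.negY x y = 2 * y := by
    simp only [WeierstrassCurve.Affine.negY, W.a₁_of_isCharNeTwoNF, W.a₃_of_isCharNeTwoNF]
    ring
  have duplication := congrArg ν (duplication_formula h.1 hy)
  rw [valuation_duplication_numerator hx, two_y, mul_pow, map_mul, map_mul, map_pow ν y,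
    valuation_y_sq_eq_x_cube h.1 hx] at duplication
  rw [two_nsmul, WeierstrassCurve.Affine.Point.add_self_of_Y_ne hy]
  refine mul_right_cancel₀ (pow_ne_zero 3 (zero_lt_one.trans hx).ne') ?_
  simp only [xValuation]
  rw [← pow_succ', ← duplication]
  norm_num [mul_assoc]

theorem not_isOfFinAddOrder_of_one_lt_xValuation [DecidableEq K] (two_ne : (2 : K) ≠ 0)
    (two_lt : ν 2 < 1) {P : W.Point} (hP : 1 < xValuation ν P) : ¬ IsOfFinAddOrder P := by
  refine not_isOfFinAddOrder_of_lt_nsmul (m := 2) (fun Q hQ ↦ ?_) hP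
  have duplication := xValuation_two_nsmul_mul two_ne hQ
  have double_pos : 0 < xValuation ν (2 • Q) := by
    refine zero_lt_iff.2 fun h0 ↦ ?_
    rw [h0, zero_mul] at duplication
    exact not_lt_zero (duplication ▸ hQ)
  exact duplication ▸ mul_lt_of_lt_one_right double_pos (valuation_four_lt_one ν two_lt)

end Doubling

section ThetaTriangle

variable {K R : Type*} [Field K] [CommRing R]

/-- The `θ`-congruent number curve `y² = x (x + (r + s) n) (x - (r - s) n)` of `n`, where
`cos θ = s / r`. -/
def thetaCongruentCurve (r s n : R) : WeierstrassCurve.Affine R where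
  a₁ := 0
  a₂ := (r + s) * n - (r - s) * n
  a₃ := 0
  a₄ := -((r + s) * n * ((r - s) * n))
  a₆ := 0

instance thetaCongruentCurve_isCharNeTwoNF (r s n : R) :
    (thetaCongruentCurve r s n).IsCharNeTwoNF := ⟨rfl, rfl⟩

theorem isIntegral_thetaCongruentCurve {Γ₀ : Type*} [LinearOrderedCommGroupWithZero Γ₀]
    {ν : Valuation K Γ₀} {r s n : K} (hr : r ∈ ν.integer) (hs : s ∈ ν.integer)
    (hn : n ∈ ν.integer) : WeierstrassCurve.IsIntegral ν.integer (thetaCongruentCurve r s n) := by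
  refine ⟨thetaCongruentCurve ⟨r, hr⟩ ⟨s, hs⟩ ⟨n, hn⟩, ?_⟩
  ext
  case a₁ | a₃ | a₆ => exact (map_zero _).symm
  all_goals rfl

/-- `(u, v, w)` is a `(K, θ)`-triangle for `n`, where `cos θ = s / r`: the angle `θ` lies between
the sides `u` and `v`, and the area `u v sin θ / 2` is `n √(r² - s²)`, which is the condition
`u v = 2 r n` because `sin θ = √(r² - s²) / r`. Positivity of the sides is not part of the notion,
as `K` carries no order. -/
structure IsThetaTriangle (r s n u v w : K) : Prop where
  law_of_cosines : w ^ 2 = u ^ 2 + v ^ 2 - 2 * u * v * (s / r)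
  area : u * v = 2 * r * n

namespace IsThetaTriangle

variable {r s n u v w : K}

theorem equation (h : IsThetaTriangle r s n u v w) (hr : r ≠ 0) (two_ne : (2 : K) ≠ 0) :
    (thetaCongruentCurve r s n).Equation ((w / 2) ^ 2) (w / 2 * ((u - v) / 2) * ((u + v) / 2)) := by
  have law : w ^ 2 = u ^ 2 + v ^ 2 - 4 * s * n := by
    have law_of_cosines := h.law_of_cosines
    field_simp at law_of_cosines
    refine mul_left_cancel₀ hr ?_
    linear_combination law_of_cosines - 2 * s * h.area
  have minus_root : (w / 2) ^ 2 - (r - s) * n = ((u - v) / 2) ^ 2 := by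
    field_simp
    linear_combination law + 2 * h.area
  have plus_root : (w / 2) ^ 2 + (r + s) * n = ((u + v) / 2) ^ 2 := by
    field_simp
    linear_combination law - 2 * h.area
  rw [WeierstrassCurve.Affine.equation_iff]
  simp only [thetaCongruentCurve]
  rw [mul_pow, mul_pow, ← minus_root, ← plus_root]
  ring

variable {Γ₀ : Type*} [LinearOrderedCommGroupWithZero Γ₀]

theorem exists_not_isOfFinAddOrder [DecidableEq K] (h : IsThetaTriangle r s n u v w)
    (hr : r ≠ 0) (two_ne : (2 : K) ≠ 0) (ν : Valuation K Γ₀) (two_lt : ν 2 < 1)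
    [WeierstrassCurve.IsIntegral ν.integer (thetaCongruentCurve r s n)] (hw : 1 < ν (w / 2)) :
    ∃ P : (thetaCongruentCurve r s n).Point, ¬ IsOfFinAddOrder P := by
  have hx : 1 < ν ((w / 2) ^ 2) := by
    rw [map_pow]
    exact one_lt_pow₀ hw two_ne_zero
  have nonsingular := nonsingular_of_one_lt_valuation_x two_ne (h.equation hr two_ne) hx
  exact ⟨.some _ _ nonsingular, not_isOfFinAddOrder_of_one_lt_xValuation two_ne two_lt hx⟩

end IsThetaTriangle

end ThetaTriangle

theorem isThetaTriangle_of_sq_eq_thirteen {K : Type*} [Field K] [CharZero K] {σ : K}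
    (hσ : σ ^ 2 = 13) : IsThetaTriangle 2 1 3 (σ / 2) (24 * σ / 13) (43 * σ / 26) where
  law_of_cosines := by
    linear_combination (43 ^ 2 / 26 ^ 2 - 1 / 4 - 24 ^ 2 / 13 ^ 2 + 12 / 13) * hσ
  area := by linear_combination 12 / 13 * hσ

theorem three_is_properly_congruent_over_sqrt_thirteen_general {K : Type*} [Field K] [CharZero K]
    [DecidableEq K] {W : WeierstrassCurve.Affine K}
    (hW : W = { a₁ := 0, a₂ := 9 - 3, a₃ := 0, a₄ := -(9 * 3), a₆ := 0 })
    {σ : K} (hσ : σ ^ 2 = 13) {u v w : K}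
    (hu : u = σ / 2) (hv : v = 24 * σ / 13) (hw : w = 43 * σ / 26) :
    (∃ P : W.Point, ¬ IsOfFinAddOrder P) ∧ w ^ 2 = u ^ 2 + v ^ 2 - u * v ∧ u * v = 12 := by
  have curve_eq : W = thetaCongruentCurve 2 1 3 := by
    rw [hW, thetaCongruentCurve]
    norm_num
  have triangle : IsThetaTriangle 2 1 3 u v w := by
    rw [hu, hv, hw]
    exact isThetaTriangle_of_sq_eq_thirteen hσ
  refine ⟨?_, by linear_combination triangle.law_of_cosines, by linear_combination triangle.area⟩
  obtain ⟨B, two_lt⟩ := exists_valuationSubring_valuation_intCast_lt_one K Int.prime_two.not_isUnit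
  have integral := isIntegral_thetaCongruentCurve (ν := B.valuation)
    (ofNat_mem _ 2) (one_mem _) (ofNat_mem _ 3)
  rw [Int.cast_ofNat] at two_lt
  have odd_part : B.valuation (43 * σ / 13) = 1 := by
    exact_mod_cast valuation_mul_div_eq_one_of_odd (a := 43) (b := 13) (d := 13) two_lt
      (by decide) (by decide) (by decide) (by exact_mod_cast hσ)
  have w_half_eq : w / 2 = 43 * σ / 13 / 4 := by rw [hw]; ring
  have one_lt_w_half : 1 < B.valuation (w / 2) := by
    rw [w_half_eq, map_div₀, odd_part, one_div,
      one_lt_inv₀ (zero_lt_iff.2 (B.valuation.ne_zero_iff.2 (by norm_num)))]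
    exact valuation_four_lt_one B.valuation two_lt
  exact curve_eq ▸ triangle.exists_not_isOfFinAddOrder two_ne_zero two_ne_zero B.valuation
    two_lt one_lt_w_half

/-- Over `K = ℚ(√13)`, the elliptic curve `E : y² = x(x + 9)(x − 3)` has a point of
infinite order, i.e. `n = 3` is properly `(ℚ(√13), π/3)`-congruent; moreover the elements
`u = √13/2`, `v = 24√13/13`, `w = 43√13/26` of `K` satisfy `w² = u² + v² − uv` and `uv = 12`,
so `(u, v, w)` is a `(ℚ(√13), π/3)`-triangle of area `3√3`. -/
theorem three_is_properly_congruent_over_sqrt_thirteen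
    (W : WeierstrassCurve.Affine ℚ⟮Real.sqrt 13⟯)
    (hW : W = { a₁ := 0, a₂ := 9 - 3, a₃ := 0, a₄ := -(9 * 3), a₆ := 0 })
    (σ : ℚ⟮Real.sqrt 13⟯) (hσ : (σ : ℝ) = Real.sqrt 13)
    (u v w : ℚ⟮Real.sqrt 13⟯)
    (hu : u = σ / 2) (hv : v = 24 * σ / 13) (hw : w = 43 * σ / 26) :
    (∃ P : W.Point, ¬ IsOfFinAddOrder P) ∧
      w ^ 2 = u ^ 2 + v ^ 2 - u * v ∧ u * v = 12 :=
  three_is_properly_congruent_over_sqrt_thirteen_general hW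
    (Subtype.ext ((congrArg (· ^ 2) hσ).trans (Real.sq_sqrt (by norm_num)))) hu hv hw
end
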